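/- Let n ≥ 3, μ, ν ∈ ℝ, 1 ≤ p, q ≤ ∞ and 0 < r ≤ ∞. Assume μ > ν, 0 < ν/n + 1/q < μ/n + 1/p ≤ 1 and ν/n + 1/q = (μ/n + 1/p) − 2/n. Assume in addition that either (1) p, q < ∞ and μ/n + 1/p < 1, or (2) r ≤ 1. Then there exists a constant C, independent of t and f, such that for every T > 0, every t ∈ (0,T] and every measurable function f on (0,T)×ℝⁿ for which the Duhamel integral converges absolutely a.e., ‖∫₀ᵗ e^{(t−τ)Δ}f(τ)·dτ‖_{K̇^ν_{q,∞}} ≤ C·sup_{0<τ<t} ‖f(τ)‖_{K̇^μ_{p,r}} (Meyer's inequality on Herz spaces). -/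

import Mathlib

open MeasureTheory Set ENNReal Filter

noncomputable section

abbrev Euc (n : ℕ) : Type := EuclideanSpace ℝ (Fin n)

def annulus (n : ℕ) (j : ℤ) : Set (Euc n) :=
  {x : Euc n | (2 : ℝ) ^ (j - 1) ≤ ‖x‖ ∧ ‖x‖ < (2 : ℝ) ^ j}

def herzNorm (n : ℕ) (s : ℝ) (q r : ℝ≥0∞) (f : Euc n → ℝ) : ℝ≥0∞ :=
  if r = ⊤ then
    ⨆ j : ℤ, ENNReal.ofReal ((2 : ℝ) ^ ((j : ℝ) * s)) *
      eLpNorm ((annulus n j).indicator f) q volume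
  else
    (∑' j : ℤ, (ENNReal.ofReal ((2 : ℝ) ^ ((j : ℝ) * s)) *
      eLpNorm ((annulus n j).indicator f) q volume) ^ r.toReal) ^ (1 / r.toReal)

def heatKernel (n : ℕ) (t : ℝ) (x y : Euc n) : ℝ :=
  (4 * Real.pi * t) ^ (-(n : ℝ) / 2) * Real.exp (-‖x - y‖ ^ 2 / (4 * t))

def heatSemigroup (n : ℕ) (t : ℝ) (f : Euc n → ℝ) (x : Euc n) : ℝ :=
  ∫ y, heatKernel n t x y * f y

/-- powers of two in `ℝ≥0∞` -/
def pw (x : ℝ) : ℝ≥0∞ := (2 : ℝ≥0∞) ^ x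

lemma pw_add (x y : ℝ) : pw (x + y) = pw x * pw y :=
  ENNReal.rpow_add _ _ (by norm_num) (by norm_num)

lemma pw_ne_top (x : ℝ) : pw x ≠ ⊤ := by
  unfold pw
  exact ENNReal.rpow_ne_top_of_ne_zero (by norm_num) (by norm_num)

lemma pw_ne_zero (x : ℝ) : pw x ≠ 0 := by
  unfold pw
  simp [ENNReal.rpow_eq_zero_iff]

lemma pw_mono {x y : ℝ} (h : x ≤ y) : pw x ≤ pw y :=
  ENNReal.rpow_le_rpow_of_exponent_le (by norm_num) h

lemma pw_zero : pw 0 = 1 := by simp [pw]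

lemma pw_rpow (x y : ℝ) : pw x ^ y = pw (x * y) := by
  simp [pw, ENNReal.rpow_mul]

lemma ofReal_two_rpow (x : ℝ) : ENNReal.ofReal ((2 : ℝ) ^ x) = pw x := by
  rw [pw, ← ENNReal.ofReal_rpow_of_pos (by norm_num)]
  norm_num

lemma pw_geom {N : ℝ} (hN : 0 < N) : ∑' i : ℕ, pw (-((i : ℝ) * N)) ≠ ⊤ := by
  have h : ∀ i : ℕ, pw (-((i : ℝ) * N)) = (pw (-N)) ^ i := by
    intro i
    rw [← ENNReal.rpow_natCast, pw_rpow]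
    congr 1; ring
  simp_rw [h]
  rw [ENNReal.tsum_geometric]
  apply ENNReal.inv_ne_top.2
  have : pw (-N) < 1 := by
    unfold pw
    exact ENNReal.rpow_lt_one_of_one_lt_of_neg (by norm_num) (by linarith)
  exact (tsub_pos_of_lt this).ne'

lemma measurableSet_annulus (n : ℕ) (j : ℤ) : MeasurableSet (annulus n j) := by
  unfold annulus
  exact (measurableSet_le measurable_const measurable_norm).inter
    (measurableSet_lt measurable_norm measurable_const)

lemma ball_vol (n : ℕ) : ∃ c : ℝ≥0∞, c ≠ ⊤ ∧ ∀ R : ℝ, 0 < R →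
    volume (Metric.ball (0 : Euc n) R) ≤ c * ENNReal.ofReal (R ^ (n : ℝ)) := by
  refine ⟨volume (Metric.ball (0 : Euc n) 1), measure_ball_lt_top.ne, fun R hR => ?_⟩
  rw [Measure.addHaar_ball_of_pos _ _ hR, mul_comm]
  simp

lemma two_zpow_eq (j : ℤ) : (2 : ℝ) ^ j = (2 : ℝ) ^ (j : ℝ) := (Real.rpow_intCast 2 j).symm

lemma annulus_vol (n : ℕ) : ∃ c : ℝ≥0∞, c ≠ ⊤ ∧ ∀ j : ℤ,
    volume (annulus n j) ≤ c * pw ((j : ℝ) * n) := by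
  obtain ⟨c, hc, h⟩ := ball_vol n
  refine ⟨c, hc, fun j => ?_⟩
  refine le_trans (measure_mono ?_) ((h ((2 : ℝ) ^ j) (by positivity)).trans ?_)
  · intro x hx
    simpa using hx.2
  · rw [two_zpow_eq, ← Real.rpow_mul (by norm_num), ofReal_two_rpow]

lemma annulus_emb (n : ℕ) (P p : ℝ≥0∞) (hP : P ≤ p) :
    ∃ c : ℝ≥0∞, c ≠ ⊤ ∧ ∀ (j : ℤ) (G : Euc n → ℝ≥0∞), Measurable G →
    eLpNorm ((annulus n j).indicator G) P volume ≤
      c * pw ((j : ℝ) * (n * ((P⁻¹).toReal - (p⁻¹).toReal))) *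
      eLpNorm ((annulus n j).indicator G) p volume := by
  obtain ⟨c, hc, h⟩ := annulus_vol n
  by_cases hP0 : P = 0
  · refine ⟨0, by simp, fun j G hG => ?_⟩
    simp [hP0]
  have hd : 0 ≤ (P⁻¹).toReal - (p⁻¹).toReal := by
    have : (p⁻¹).toReal ≤ (P⁻¹).toReal :=
      ENNReal.toReal_mono (ENNReal.inv_ne_top.2 hP0) (ENNReal.inv_le_inv.2 hP)
    linarith
  refine ⟨c ^ ((P⁻¹).toReal - (p⁻¹).toReal), ENNReal.rpow_ne_top_of_nonneg hd hc,
    fun j G hG => ?_⟩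
  rw [eLpNorm_indicator_eq_eLpNorm_restrict (measurableSet_annulus n j),
    eLpNorm_indicator_eq_eLpNorm_restrict (measurableSet_annulus n j)]
  refine (eLpNorm_le_eLpNorm_mul_rpow_measure_univ hP hG.aestronglyMeasurable).trans ?_
  rw [mul_comm]
  gcongr
  rw [one_div, one_div, ← ENNReal.toReal_inv, ← ENNReal.toReal_inv, Measure.restrict_apply_univ]
  refine (ENNReal.rpow_le_rpow (h j) hd).trans ?_
  rw [ENNReal.mul_rpow_of_nonneg _ _ hd, pw_rpow]
  apply le_of_eq
  congr 2; ring

lemma herz_term_le (n : ℕ) (μ : ℝ) (p r : ℝ≥0∞) (hr : 0 < r) (h : Euc n → ℝ) (j : ℤ) :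
    pw ((j : ℝ) * μ) * eLpNorm ((annulus n j).indicator (fun y => ‖h y‖ₑ)) p volume ≤
      herzNorm n μ p r h := by
  have he : eLpNorm ((annulus n j).indicator (fun y => ‖h y‖ₑ)) p volume =
      eLpNorm ((annulus n j).indicator h) p volume := by
    rw [eLpNorm_indicator_eq_eLpNorm_restrict (measurableSet_annulus n j),
      eLpNorm_indicator_eq_eLpNorm_restrict (measurableSet_annulus n j), eLpNorm_enorm]
  rw [he]
  unfold herzNorm
  simp_rw [ofReal_two_rpow]
  split_ifs with hrt
  · exact le_iSup (fun j : ℤ => pw ((j : ℝ) * μ) *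
      eLpNorm ((annulus n j).indicator h) p volume) j
  · have hr' : 0 < r.toReal := ENNReal.toReal_pos hr.ne' hrt
    have := ENNReal.rpow_le_rpow (ENNReal.le_tsum (f := fun j : ℤ => (pw ((j : ℝ) * μ) *
      eLpNorm ((annulus n j).indicator h) p volume) ^ r.toReal) j)
      (show 0 ≤ 1 / r.toReal by positivity)
    refine le_trans (le_of_eq ?_) this
    rw [← ENNReal.rpow_mul, mul_one_div_cancel hr'.ne', ENNReal.rpow_one]

lemma herz_sum_le (n : ℕ) (μ : ℝ) (p r : ℝ≥0∞) (hr : 0 < r) (hr1 : r ≤ 1) (h : Euc n → ℝ) :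
    ∑' j : ℤ, pw ((j : ℝ) * μ) *
      eLpNorm ((annulus n j).indicator (fun y => ‖h y‖ₑ)) p volume ≤
      herzNorm n μ p r h := by
  have hrt : r ≠ ⊤ := (hr1.trans_lt ENNReal.one_lt_top).ne
  have hr' : 0 < r.toReal := ENNReal.toReal_pos hr.ne' hrt
  have hr1' : r.toReal ≤ 1 := by
    simpa using ENNReal.toReal_mono ENNReal.one_ne_top hr1
  have hterm := herz_term_le n μ p r hr h
  set S := herzNorm n μ p r h with hS
  set a : ℤ → ℝ≥0∞ := fun j => pw ((j : ℝ) * μ) *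
      eLpNorm ((annulus n j).indicator (fun y => ‖h y‖ₑ)) p volume with ha
  have hSr : S ^ r.toReal = ∑' j, a j ^ r.toReal := by
    rw [hS, herzNorm, if_neg hrt, ← ENNReal.rpow_mul, one_div_mul_cancel hr'.ne',
      ENNReal.rpow_one]
    refine tsum_congr fun j => ?_
    rw [ha, ofReal_two_rpow]
    simp only
    rw [eLpNorm_indicator_eq_eLpNorm_restrict (measurableSet_annulus n j),
      eLpNorm_indicator_eq_eLpNorm_restrict (measurableSet_annulus n j), eLpNorm_enorm]
  calc ∑' j, a j ≤ ∑' j, a j ^ r.toReal * S ^ (1 - r.toReal) := by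
        refine ENNReal.tsum_le_tsum fun j => ?_
        calc a j = a j ^ (r.toReal + (1 - r.toReal)) := by simp
          _ = a j ^ r.toReal * a j ^ (1 - r.toReal) :=
            ENNReal.rpow_add_of_nonneg _ _ hr'.le (by linarith)
          _ ≤ _ := mul_le_mul' le_rfl (ENNReal.rpow_le_rpow (hterm j) (by linarith))
    _ = S := by
        rw [ENNReal.tsum_mul_right, ← hSr, ← ENNReal.rpow_add_of_nonneg _ _ hr'.le (by linarith)]
        simp

/-- time weight -/
def psi (n : ℕ) (θ R s : ℝ) : ℝ :=
  if s ≤ R ^ 2 then s ^ (-θ) else R ^ ((n : ℝ) - 2 * θ) * s ^ (-(n : ℝ) / 2)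

lemma measurable_psi (n : ℕ) (θ R : ℝ) : Measurable (psi n θ R) := by
  unfold psi
  exact Measurable.ite measurableSet_Iic (by fun_prop) (by fun_prop)

lemma psi_pos (n : ℕ) (θ R s : ℝ) (hR : 0 < R) (hs : 0 < s) : 0 < psi n θ R s := by
  unfold psi
  split_ifs <;> positivity

lemma psi_integral (n : ℕ) (hn : 3 ≤ n) (θ : ℝ) (hθ1 : θ < 1) :
    ∃ c : ℝ≥0∞, c ≠ ⊤ ∧ ∀ R : ℝ, 0 < R →
      ∫⁻ s in Ioi (0 : ℝ), ENNReal.ofReal (psi n θ R s) ≤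
        c * ENNReal.ofReal (R ^ (2 - 2 * θ)) := by
  have hn' : (3 : ℝ) ≤ n := by exact_mod_cast hn
  refine ⟨ENNReal.ofReal (1 / (1 - θ)) + ENNReal.ofReal (1 / ((n : ℝ) / 2 - 1)), by simp,
    fun R hR => ?_⟩
  have hR2 : (0 : ℝ) < R ^ 2 := by positivity
  have hsplit : Ioi (0 : ℝ) = Ioc 0 (R ^ 2) ∪ Ioi (R ^ 2) := (Ioc_union_Ioi_eq_Ioi hR2.le).symm
  rw [hsplit, add_mul]
  refine (lintegral_union_le _ _ _).trans (add_le_add ?_ ?_)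
  · have h1 : ∫⁻ s in Ioc (0 : ℝ) (R ^ 2), ENNReal.ofReal (psi n θ R s) =
        ∫⁻ s in Ioc (0 : ℝ) (R ^ 2), ENNReal.ofReal (s ^ (-θ)) := by
      refine setLIntegral_congr_fun measurableSet_Ioc fun s hs => ?_
      simp [psi, hs.2]
    have hint : IntegrableOn (fun s : ℝ => s ^ (-θ)) (Ioc 0 (R ^ 2)) := by
      have := intervalIntegral.intervalIntegrable_rpow' (a := 0) (b := R ^ 2)
        (show -1 < -θ by linarith)
      rwa [intervalIntegrable_iff_integrableOn_Ioc_of_le hR2.le] at this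
    rw [h1, ← ofReal_integral_eq_lintegral_ofReal hint, ← ENNReal.ofReal_mul]
    · apply ENNReal.ofReal_le_ofReal
      rw [← intervalIntegral.integral_of_le hR2.le, integral_rpow (Or.inl (by linarith)),
        Real.zero_rpow (by linarith), ← Real.rpow_natCast R 2, ← Real.rpow_mul hR.le]
      apply le_of_eq
      have : -θ + 1 = 1 - θ := by ring
      rw [this]
      have : ((2 : ℕ) : ℝ) * (1 - θ) = 2 - 2 * θ := by push_cast; ring
      rw [this]; ring
    · apply one_div_nonneg.2; linarith
    · refine (ae_restrict_iff' measurableSet_Ioc).2 (ae_of_all _ fun s hs => ?_)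
      exact Real.rpow_nonneg hs.1.le _
  · have h1 : ∫⁻ s in Ioi (R ^ 2), ENNReal.ofReal (psi n θ R s) =
        ∫⁻ s in Ioi (R ^ 2), ENNReal.ofReal (R ^ ((n : ℝ) - 2 * θ) * s ^ (-(n : ℝ) / 2)) := by
      refine setLIntegral_congr_fun measurableSet_Ioi fun s hs => ?_
      have : ¬ s ≤ R ^ 2 := not_le.2 hs
      simp [psi, this]
    have hint : IntegrableOn (fun s : ℝ => R ^ ((n : ℝ) - 2 * θ) * s ^ (-(n : ℝ) / 2))
        (Ioi (R ^ 2)) :=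
      (integrableOn_Ioi_rpow_of_lt (by linarith) hR2).const_mul _
    rw [h1, ← ofReal_integral_eq_lintegral_ofReal hint, ← ENNReal.ofReal_mul]
    · apply ENNReal.ofReal_le_ofReal
      rw [integral_const_mul, integral_Ioi_rpow_of_lt (by linarith) hR2,
        ← Real.rpow_natCast R 2, ← Real.rpow_mul hR.le]
      apply le_of_eq
      have e1 : R ^ (2 - 2 * θ) = R ^ ((n : ℝ) - 2 * θ) *
          R ^ (((2 : ℕ) : ℝ) * (-(n : ℝ) / 2 + 1)) := by
        rw [← Real.rpow_add hR]; congr 1; push_cast; ring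
      rw [e1]
      have : (n : ℝ) / 2 - 1 ≠ 0 := by linarith
      have : -(n : ℝ) / 2 + 1 ≠ 0 := by linarith
      have e2 : -(n : ℝ) / 2 + 1 = -((n : ℝ) / 2 - 1) := by ring
      rw [neg_div, div_eq_mul_inv, e2, inv_neg]; ring
    · apply one_div_nonneg.2; linarith
    · refine (ae_restrict_iff' measurableSet_Ioi).2 (ae_of_all _ fun s hs => ?_)
      have : 0 < s := hR2.trans hs
      simp only [Pi.zero_apply]
      positivity

lemma psi_time (n : ℕ) (hn : 3 ≤ n) (θ : ℝ) (hθ1 : θ < 1) :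
    ∃ c : ℝ≥0∞, c ≠ ⊤ ∧ ∀ R : ℝ, 0 < R → ∀ t : ℝ,
      ∫⁻ τ in Ioo (0 : ℝ) t, ENNReal.ofReal (psi n θ R (t - τ)) ≤
        c * ENNReal.ofReal (R ^ (2 - 2 * θ)) := by
  obtain ⟨c, hc, h⟩ := psi_integral n hn θ hθ1
  refine ⟨c, hc, fun R hR t => le_trans ?_ (h R hR)⟩
  rw [← lintegral_indicator measurableSet_Ioo, ← lintegral_indicator measurableSet_Ioi,
    ← lintegral_sub_left_eq_self _ t]
  refine lintegral_mono fun τ => ?_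
  by_cases hτ : t - τ ∈ Ioo 0 t
  · have : τ ∈ Ioi (0 : ℝ) := by simpa using hτ.2
    rw [indicator_of_mem hτ, indicator_of_mem this]
    simp
  · rw [indicator_of_notMem hτ]
    exact zero_le

lemma exp_bound (n : ℕ) : ∃ c : ℝ, 1 ≤ c ∧ ∀ x : ℝ, 1 ≤ x →
    x ^ ((n : ℝ) / 2) * Real.exp (-x / 4) ≤ c := by
  refine ⟨4 ^ n * (Nat.factorial n), ?_, fun x hx => ?_⟩
  · have h1 : (1 : ℝ) ≤ 4 ^ n := one_le_pow₀ (by norm_num)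
    have h2 : (1 : ℝ) ≤ (Nat.factorial n : ℝ) := by exact_mod_cast Nat.factorial_pos n
    nlinarith
  · have h1 := Real.pow_div_factorial_le_exp (x / 4) (by linarith) n
    have h2 : x ^ ((n : ℝ) / 2) ≤ x ^ n := by
      rw [← Real.rpow_natCast x n]
      apply Real.rpow_le_rpow_of_exponent_le hx
      have : (0 : ℝ) ≤ n := Nat.cast_nonneg n
      linarith
    have h3 : x ^ n ≤ 4 ^ n * (Nat.factorial n) * Real.exp (x / 4) := by
      rw [div_pow] at h1
      have hf : (0 : ℝ) < (Nat.factorial n : ℝ) := by exact_mod_cast Nat.factorial_pos n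
      have h4 : (0 : ℝ) < 4 ^ n := by positivity
      rw [div_div, div_le_iff₀ (by positivity)] at h1
      linarith
    rw [neg_div, Real.exp_neg, ← div_eq_mul_inv, div_le_iff₀ (Real.exp_pos _)]
    exact h2.trans h3

lemma heatKernel_nonneg (n : ℕ) (s : ℝ) (hs : 0 < s) (x y : Euc n) : 0 ≤ heatKernel n s x y := by
  unfold heatKernel
  have := Real.pi_pos
  positivity

lemma four_pi_rpow_le (s : ℝ) (hs : 0 < s) (a : ℝ) (ha : a ≤ 0) :
    (4 * Real.pi * s) ^ a ≤ s ^ a := by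
  apply Real.rpow_le_rpow_of_nonpos hs _ ha
  have := Real.pi_gt_three
  nlinarith

lemma heatKernel_le (n : ℕ) (s : ℝ) (hs : 0 < s) (x y : Euc n) :
    heatKernel n s x y ≤ s ^ (-(n : ℝ) / 2) := by
  unfold heatKernel
  have h1 := four_pi_rpow_le s hs (-(n : ℝ) / 2) (by
    have : (0 : ℝ) ≤ n := Nat.cast_nonneg n
    linarith)
  have h2 : Real.exp (-‖x - y‖ ^ 2 / (4 * s)) ≤ 1 := by
    rw [Real.exp_le_one_iff]
    apply div_nonpos_of_nonpos_of_nonneg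
    · simp
    · positivity
  have h3 : 0 ≤ s ^ (-(n : ℝ) / 2) := by positivity
  calc _ ≤ s ^ (-(n : ℝ) / 2) * 1 := mul_le_mul h1 h2 (Real.exp_pos _).le h3
    _ = _ := mul_one _

lemma heat_far (n : ℕ) : ∃ c : ℝ, 1 ≤ c ∧ ∀ (D s : ℝ) (x y : Euc n), 0 < D → 0 < s →
    D ≤ ‖x - y‖ → heatKernel n s x y ≤ c * (D ^ (-(n : ℝ)) * psi n 0 D s) := by
  obtain ⟨c, hc, h⟩ := exp_bound n
  refine ⟨c, hc, fun D s x y hD hs hxy => ?_⟩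
  unfold psi
  split_ifs with hsD
  · have hx := h (D ^ 2 / s) (by rw [le_div_iff₀ hs]; linarith)
    have hn0 : (0 : ℝ) ≤ n := Nat.cast_nonneg n
    have h1 := four_pi_rpow_le s hs (-(n : ℝ) / 2) (by linarith)
    have h2 : Real.exp (-‖x - y‖ ^ 2 / (4 * s)) ≤ Real.exp (-(D ^ 2 / s) / 4) := by
      apply Real.exp_le_exp.2
      have : -(D ^ 2 / s) / 4 = -D ^ 2 / (4 * s) := by field_simp
      rw [this]
      have := pow_le_pow_left₀ hD.le hxy 2
      gcongr
    have h3 : s ^ (-(n : ℝ) / 2) = (D ^ 2 / s) ^ ((n : ℝ) / 2) * D ^ (-(n : ℝ)) := by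
      rw [Real.div_rpow (by positivity) hs.le, ← Real.rpow_natCast D 2, ← Real.rpow_mul hD.le,
        neg_div, Real.rpow_neg hs.le, Real.rpow_neg hD.le]
      have : ((2 : ℕ) : ℝ) * ((n : ℝ) / 2) = n := by push_cast; ring
      rw [this]
      have : D ^ (n : ℝ) ≠ 0 := by positivity
      field_simp
    unfold heatKernel
    calc _ ≤ s ^ (-(n : ℝ) / 2) * Real.exp (-(D ^ 2 / s) / 4) :=
          mul_le_mul h1 h2 (Real.exp_pos _).le (by positivity)
      _ = ((D ^ 2 / s) ^ ((n : ℝ) / 2) * Real.exp (-(D ^ 2 / s) / 4)) * D ^ (-(n : ℝ)) := by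
          rw [h3]; ring
      _ ≤ c * D ^ (-(n : ℝ)) := by gcongr
      _ = _ := by simp
  · refine (heatKernel_le n s hs x y).trans ?_
    have : D ^ (-(n : ℝ)) * (D ^ ((n : ℝ) - 2 * 0) * s ^ (-(n : ℝ) / 2)) = s ^ (-(n : ℝ) / 2) := by
      rw [← mul_assoc, ← Real.rpow_add hD]; simp
    rw [this]
    have : 0 ≤ s ^ (-(n : ℝ) / 2) := by positivity
    nlinarith

lemma measurable_heat (n : ℕ) (t : ℝ) (x : Euc n) :
    Measurable (fun z : ℝ × Euc n => ENNReal.ofReal (heatKernel n (t - z.1) x z.2)) := by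
  unfold heatKernel
  fun_prop

lemma far_lemma (n : ℕ) (hn : 3 ≤ n) : ∃ c : ℝ≥0∞, c ≠ ⊤ ∧ ∀ (D t : ℝ) (x : Euc n)
    (A : Set (Euc n)) (F : ℝ → Euc n → ℝ≥0∞) (S : ℝ≥0∞), 0 < D → MeasurableSet A →
    (∀ y ∈ A, D ≤ ‖x - y‖) → (∀ τ ∈ Ioo 0 t, ∫⁻ y in A, F τ y ≤ S) →
    (∀ τ, Measurable (F τ)) →
    ∫⁻ τ in Ioo 0 t, ∫⁻ y in A, ENNReal.ofReal (heatKernel n (t - τ) x y) * F τ y ≤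
      c * ENNReal.ofReal (D ^ (2 - (n : ℝ))) * S := by
  obtain ⟨c, hc, h⟩ := heat_far n
  obtain ⟨c', hc', h'⟩ := psi_time n hn 0 (by norm_num)
  refine ⟨ENNReal.ofReal c * c', ENNReal.mul_ne_top (by simp) hc',
    fun D t x A F S hD hA hDA hS hF => ?_⟩
  have hc0 : 0 ≤ c := by linarith
  calc _ ≤ ∫⁻ τ in Ioo 0 t, ENNReal.ofReal c * ENNReal.ofReal (D ^ (-(n : ℝ))) * S *
        ENNReal.ofReal (psi n 0 D (t - τ)) := by
        refine setLIntegral_mono' measurableSet_Ioo fun τ hτ => ?_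
        have hτ' : 0 < t - τ := by linarith [hτ.2]
        calc _ ≤ ∫⁻ y in A, ENNReal.ofReal (c * (D ^ (-(n : ℝ)) * psi n 0 D (t - τ))) * F τ y := by
              refine setLIntegral_mono' hA fun y hy => ?_
              gcongr
              exact h D _ x y hD hτ' (hDA y hy)
          _ = ENNReal.ofReal (c * (D ^ (-(n : ℝ)) * psi n 0 D (t - τ))) * ∫⁻ y in A, F τ y :=
              lintegral_const_mul _ (hF τ)
          _ ≤ ENNReal.ofReal (c * (D ^ (-(n : ℝ)) * psi n 0 D (t - τ))) * S := by
              gcongr; exact hS τ hτ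
          _ = _ := by
              rw [ENNReal.ofReal_mul hc0, ENNReal.ofReal_mul (by positivity)]; ring
    _ = ENNReal.ofReal c * ENNReal.ofReal (D ^ (-(n : ℝ))) * S *
        ∫⁻ τ in Ioo 0 t, ENNReal.ofReal (psi n 0 D (t - τ)) :=
        lintegral_const_mul _ ((measurable_psi n 0 D).comp (by fun_prop)).ennreal_ofReal
    _ ≤ ENNReal.ofReal c * ENNReal.ofReal (D ^ (-(n : ℝ))) * S *
        (c' * ENNReal.ofReal (D ^ (2 - 2 * (0 : ℝ)))) := by gcongr; exact h' D hD t
    _ = _ := by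
        have : D ^ (2 - (n : ℝ)) = D ^ (-(n : ℝ)) * D ^ (2 - 2 * (0 : ℝ)) := by
          rw [← Real.rpow_add hD]; congr 1; ring
        rw [this, ENNReal.ofReal_mul (by positivity)]; ring

lemma heat_near (n : ℕ) (m θ : ℝ) (hm : 1 ≤ m) (hmθ : ((n : ℝ) - 2 * θ) * m = n) :
    ∃ c : ℝ≥0∞, c ≠ ⊤ ∧ ∀ (R s : ℝ), 0 < R → 0 < s →
      ∫⁻ z : Euc n, ((Metric.ball (0 : Euc n) (4 * R)).indicator
        (fun z => ENNReal.ofReal (heatKernel n s z 0)) z) ^ m ≤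
      c * ENNReal.ofReal (psi n θ R s) ^ m := by
  obtain ⟨c, hc, h⟩ := ball_vol n
  have hm0 : 0 < m := by linarith
  have hn0 : (0 : ℝ) ≤ n := Nat.cast_nonneg n
  refine ⟨1 + c * ENNReal.ofReal (4 ^ (n : ℝ)), by simp [ENNReal.mul_ne_top, hc],
    fun R s hR hs => ?_⟩
  by_cases hsR : s ≤ R ^ 2
  · have hpsi : psi n θ R s = s ^ (-θ) := by simp [psi, hsR]
    have hb : 0 < m / (4 * s) := by positivity
    have hG := GaussianFourier.integral_rexp_neg_mul_sq_norm (V := Euc n) hb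
    have hGi : Integrable (fun v : Euc n => Real.exp (-(m / (4 * s)) * ‖v‖ ^ 2)) := by
      by_contra hcon
      rw [integral_undef hcon] at hG
      have : 0 < (Real.pi / (m / (4 * s))) ^ ((Module.finrank ℝ (Euc n) : ℝ) / 2) := by
        have := Real.pi_pos
        positivity
      linarith
    have hpi := Real.pi_pos
    calc _ ≤ ∫⁻ z : Euc n, ENNReal.ofReal (((4 * Real.pi * s) ^ (-(n : ℝ) / 2)) ^ m *
            Real.exp (-(m / (4 * s)) * ‖z‖ ^ 2)) := by
          refine lintegral_mono fun z => ?_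
          refine (ENNReal.rpow_le_rpow (indicator_le_self _ _ z) hm0.le).trans ?_
          rw [ENNReal.ofReal_rpow_of_nonneg (heatKernel_nonneg n s hs z 0) hm0.le]
          apply ENNReal.ofReal_le_ofReal
          unfold heatKernel
          rw [Real.mul_rpow (by positivity) (Real.exp_pos _).le, ← Real.exp_mul]
          apply le_of_eq
          congr 2
          rw [sub_zero]; field_simp
      _ = ENNReal.ofReal (((4 * Real.pi * s) ^ (-(n : ℝ) / 2)) ^ m *
            (Real.pi / (m / (4 * s))) ^ ((n : ℝ) / 2)) := by
          rw [← ofReal_integral_eq_lintegral_ofReal (hGi.const_mul _)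
            (ae_of_all _ fun z => by simp only [Pi.zero_apply]; positivity),
            integral_const_mul, hG]
          simp
      _ ≤ ENNReal.ofReal ((s ^ (-θ)) ^ m) := by
          apply ENNReal.ofReal_le_ofReal
          have e1 : (Real.pi / (m / (4 * s))) ^ ((n : ℝ) / 2) ≤
              (4 * Real.pi * s) ^ ((n : ℝ) / 2) := by
            apply Real.rpow_le_rpow (by positivity) _ (by positivity)
            rw [div_div_eq_mul_div, div_le_iff₀ hm0]
            have : 0 < Real.pi * s := by positivity
            nlinarith
          calc _ ≤ ((4 * Real.pi * s) ^ (-(n : ℝ) / 2)) ^ m *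
                (4 * Real.pi * s) ^ ((n : ℝ) / 2) := by gcongr
            _ = (4 * Real.pi * s) ^ (-θ * m) := by
                rw [← Real.rpow_mul (by positivity), ← Real.rpow_add (by positivity)]
                congr 1; linarith
            _ ≤ s ^ (-θ * m) := by
                apply four_pi_rpow_le s hs
                nlinarith
            _ = _ := by rw [Real.rpow_mul hs.le]
      _ = 1 * ENNReal.ofReal (psi n θ R s) ^ m := by
          rw [hpsi, one_mul, ENNReal.ofReal_rpow_of_nonneg (by positivity) hm0.le]
      _ ≤ _ := by gcongr; exact le_self_add
  · have hpsi : psi n θ R s = R ^ ((n : ℝ) - 2 * θ) * s ^ (-(n : ℝ) / 2) := by simp [psi, hsR]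
    calc _ ≤ ∫⁻ z : Euc n, (Metric.ball (0 : Euc n) (4 * R)).indicator
            (fun _ => ENNReal.ofReal (s ^ (-(n : ℝ) / 2)) ^ m) z := by
          refine lintegral_mono fun z => ?_
          by_cases hz : z ∈ Metric.ball (0 : Euc n) (4 * R)
          · simp only [indicator_of_mem hz]
            gcongr
            exact heatKernel_le n s hs z 0
          · simp only [indicator_of_notMem hz]
            rw [ENNReal.zero_rpow_of_pos hm0]
      _ = ENNReal.ofReal (s ^ (-(n : ℝ) / 2)) ^ m * volume (Metric.ball (0 : Euc n) (4 * R)) := by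
          rw [lintegral_indicator measurableSet_ball, setLIntegral_const]
      _ ≤ ENNReal.ofReal (s ^ (-(n : ℝ) / 2)) ^ m * (c * ENNReal.ofReal ((4 * R) ^ (n : ℝ))) := by
          gcongr; exact h _ (by positivity)
      _ = c * ENNReal.ofReal (4 ^ (n : ℝ)) * ENNReal.ofReal (psi n θ R s) ^ m := by
          rw [hpsi, ENNReal.ofReal_mul (by positivity), ENNReal.mul_rpow_of_nonneg _ _ hm0.le,
            ENNReal.ofReal_rpow_of_nonneg (x := R ^ ((n : ℝ) - 2 * θ)) (by positivity) hm0.le,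
            ← Real.rpow_mul hR.le, hmθ, Real.mul_rpow (by norm_num) hR.le,
            ENNReal.ofReal_mul (by positivity)]
          ring
      _ ≤ _ := by gcongr; exact le_add_self

/-- pointwise three-function Hölder bound -/
lemma ym_pointwise {E : Type*} [MeasurableSpace E] (vol : Measure E) [SFinite vol]
    (ρ : Measure ℝ) [SFinite ρ] (P β m : ℝ) (hP : 1 ≤ P) (hβ : 0 ≤ β) (hβP : β ≤ 1 / P)
    (hm : m * (1 - 1 / P + β) = 1)
    (k F : ℝ → E → ℝ≥0∞) (hk : Measurable (Function.uncurry k))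
    (hF : Measurable (Function.uncurry F)) (B M : ℝ≥0∞)
    (hB : ∀ᵐ τ ∂ρ, ∫⁻ y, k τ y ^ m ∂vol ≤ B) (hM : ∀ᵐ τ ∂ρ, ∫⁻ y, F τ y ^ P ∂vol ≤ M) :
    ∫⁻ τ, ∫⁻ y, k τ y * F τ y ∂vol ∂ρ ≤
      (∫⁻ τ, ∫⁻ y, k τ y ^ m * F τ y ^ P ∂vol ∂ρ) ^ β * (B * ρ univ) ^ (1 - 1 / P) *
        (M * ρ univ) ^ (1 / P - β) := by
  have hP0 : 0 < P := by linarith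
  have h1P : 0 ≤ 1 - 1 / P := by
    have : 1 / P ≤ 1 := by rw [div_le_one hP0]; exact hP
    linarith
  have hm0 : 0 ≤ m := by
    by_contra hcon
    push Not at hcon
    nlinarith
  have hkm : Measurable (fun z : ℝ × E => k z.1 z.2 ^ m) := hk.pow_const m
  have hFP : Measurable (fun z : ℝ × E => F z.1 z.2 ^ P) := hF.pow_const P
  have hkF : Measurable (fun z : ℝ × E => k z.1 z.2 ^ m * F z.1 z.2 ^ P) := hkm.mul hFP
  let f : Fin 3 → ℝ × E → ℝ≥0∞ := ![fun z => k z.1 z.2 ^ m * F z.1 z.2 ^ P,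
    fun z => k z.1 z.2 ^ m, fun z => F z.1 z.2 ^ P]
  let e : Fin 3 → ℝ := ![β, 1 - 1 / P, 1 / P - β]
  have key := ENNReal.lintegral_prod_norm_pow_le (μ := ρ.prod vol) Finset.univ (f := f) (p := e)
    (by
      intro i _
      fin_cases i
      · exact (hkm.mul hFP).aemeasurable
      · exact hkm.aemeasurable
      · exact hFP.aemeasurable)
    (by simp only [e, Fin.sum_univ_three, Matrix.cons_val_zero, Matrix.cons_val_one,
      Matrix.cons_val]; ring)
    (by
      intro i _
      fin_cases i
      · exact hβ
      · exact h1P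
      · simp only [e]; simpa using hβP)
  simp only [Fin.prod_univ_three, f, e, Matrix.cons_val_zero, Matrix.cons_val_one,
    Matrix.cons_val] at key
  have hL : ∫⁻ τ, ∫⁻ y, k τ y * F τ y ∂vol ∂ρ =
      ∫⁻ z, (k z.1 z.2 ^ m * F z.1 z.2 ^ P) ^ β * (k z.1 z.2 ^ m) ^ (1 - 1 / P) *
        (F z.1 z.2 ^ P) ^ (1 / P - β) ∂(ρ.prod vol) := by
    rw [← lintegral_prod (fun z : ℝ × E => k z.1 z.2 * F z.1 z.2) (hk.mul hF).aemeasurable]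
    refine lintegral_congr fun z => ?_
    have hb2 : 0 ≤ 1 / P - β := by linarith
    rw [ENNReal.mul_rpow_of_nonneg _ _ hβ, ← ENNReal.rpow_mul, ← ENNReal.rpow_mul,
      ← ENNReal.rpow_mul, ← ENNReal.rpow_mul]
    calc k z.1 z.2 * F z.1 z.2 = k z.1 z.2 ^ (m * β + m * (1 - 1 / P)) *
          F z.1 z.2 ^ (P * β + P * (1 / P - β)) := by
          have e1 : m * β + m * (1 - 1 / P) = 1 := by linarith
          have e2 : P * β + P * (1 / P - β) = 1 := by field_simp; ring
          rw [e1, e2, ENNReal.rpow_one, ENNReal.rpow_one]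
      _ = _ := by
          rw [ENNReal.rpow_add_of_nonneg _ _ (by positivity) (by positivity),
            ENNReal.rpow_add_of_nonneg _ _ (by positivity) (by positivity)]
          ring
  rw [hL]
  refine key.trans ?_
  rw [lintegral_prod _ hkF.aemeasurable, lintegral_prod _ hkm.aemeasurable,
    lintegral_prod _ hFP.aemeasurable]
  refine mul_le_mul' (mul_le_mul' le_rfl (ENNReal.rpow_le_rpow ?_ h1P))
    (ENNReal.rpow_le_rpow ?_ (by linarith))
  · calc _ ≤ ∫⁻ τ, B ∂ρ := lintegral_mono_ae hB
      _ = _ := lintegral_const _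
  · calc _ ≤ ∫⁻ τ, M ∂ρ := lintegral_mono_ae hM
      _ = _ := lintegral_const _

lemma ym_norm (n : ℕ)
    (ρ : Measure ℝ) [SFinite ρ] (P m : ℝ) (Q : ℝ≥0∞) (hQ : 1 ≤ Q) (hP : 1 ≤ P)
    (hβP : (Q⁻¹).toReal ≤ 1 / P)
    (hm : m * (1 - 1 / P + (Q⁻¹).toReal) = 1)
    (k F : ℝ → Euc n → ℝ≥0∞) (hk : Measurable (Function.uncurry k))
    (hF : Measurable (Function.uncurry F)) (B M : ℝ≥0∞)
    (hB : ∀ᵐ τ ∂ρ, ∫⁻ y, k τ y ^ m ≤ B) (hM : ∀ᵐ τ ∂ρ, ∫⁻ y, F τ y ^ P ≤ M) :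
    eLpNorm (fun x => ∫⁻ τ, ∫⁻ y, k τ (x - y) * F τ y ∂volume ∂ρ) Q volume ≤
      ρ univ * B ^ (1 - 1 / P + (Q⁻¹).toReal) * M ^ (1 / P) := by
  have hP0 : 0 < P := by linarith
  have h1P : 0 ≤ 1 - 1 / P := by
    have : 1 / P ≤ 1 := by rw [div_le_one hP0]; exact hP
    linarith
  set β := (Q⁻¹).toReal with hβdef
  have hβ : 0 ≤ β := ENNReal.toReal_nonneg
  have hb2 : 0 ≤ 1 / P - β := by linarith
  have hpt : ∀ x : Euc n, ∫⁻ τ, ∫⁻ y, k τ (x - y) * F τ y ∂volume ∂ρ ≤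
      (∫⁻ τ, ∫⁻ y, k τ (x - y) ^ m * F τ y ^ P ∂volume ∂ρ) ^ β * (B * ρ univ) ^ (1 - 1 / P) *
        (M * ρ univ) ^ (1 / P - β) := by
    intro x
    refine ym_pointwise volume ρ P β m hP hβ hβP hm (fun τ y => k τ (x - y)) F ?_ hF B M ?_ hM
    · exact hk.comp (measurable_fst.prodMk (measurable_const.sub measurable_snd))
    · filter_upwards [hB] with τ hτ
      rwa [lintegral_sub_left_eq_self (fun z => k τ z ^ m) x]
  have hfin : (B * M * ρ univ) ^ β * ((B * ρ univ) ^ (1 - 1 / P) * (M * ρ univ) ^ (1 / P - β)) =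
      ρ univ * B ^ (1 - 1 / P + β) * M ^ (1 / P) := by
    rw [ENNReal.mul_rpow_of_nonneg _ _ hβ, ENNReal.mul_rpow_of_nonneg _ _ hβ,
      ENNReal.mul_rpow_of_nonneg _ _ h1P, ENNReal.mul_rpow_of_nonneg _ _ hb2]
    have e1 : ρ univ = ρ univ ^ β * ρ univ ^ (1 - 1 / P) * ρ univ ^ (1 / P - β) := by
      rw [← ENNReal.rpow_add_of_nonneg _ _ hβ h1P,
        ← ENNReal.rpow_add_of_nonneg _ _ (by positivity) hb2]
      have : β + (1 - 1 / P) + (1 / P - β) = 1 := by ring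
      rw [this, ENNReal.rpow_one]
    have e2 : M ^ (1 / P) = M ^ β * M ^ (1 / P - β) := by
      rw [← ENNReal.rpow_add_of_nonneg _ _ hβ hb2]; congr 1; ring
    have e3 : B ^ (1 - 1 / P + β) = B ^ (1 - 1 / P) * B ^ β :=
      ENNReal.rpow_add_of_nonneg _ _ h1P hβ
    conv_rhs => rw [e1, e2, e3]
    ring
  by_cases hQt : Q = ⊤
  · have hβ0 : β = 0 := by simp [hβdef, hQt]
    rw [hQt, eLpNorm_exponent_top]
    refine eLpNormEssSup_le_of_ae_enorm_bound (ae_of_all _ fun x => ?_)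
    rw [← hfin]
    simp only [enorm_eq_self]
    refine (hpt x).trans ?_
    rw [hβ0]
    simp
  · have hQ0 : Q ≠ 0 := (zero_lt_one.trans_le hQ).ne'
    have hQr : 0 < Q.toReal := ENNReal.toReal_pos hQ0 hQt
    have hβQ : β * Q.toReal = 1 := by
      rw [hβdef, ENNReal.toReal_inv, inv_mul_cancel₀ hQr.ne']
    have hβQ' : 1 / Q.toReal = β := by
      rw [hβdef, ENNReal.toReal_inv, one_div]
    rw [eLpNorm_eq_lintegral_rpow_enorm_toReal hQ0 hQt, hβQ', ← hfin]
    simp only [enorm_eq_self]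
    set A := (B * ρ univ) ^ (1 - 1 / P) * (M * ρ univ) ^ (1 / P - β) with hA
    have hkm : Measurable (fun w : Euc n × (ℝ × Euc n) =>
        k w.2.1 (w.1 - w.2.2) ^ m * F w.2.1 w.2.2 ^ P) := by
      have h1 : Measurable (fun w : Euc n × (ℝ × Euc n) => k w.2.1 (w.1 - w.2.2)) :=
        hk.comp (f := fun w : Euc n × (ℝ × Euc n) => (w.2.1, w.1 - w.2.2)) (by fun_prop)
      have h2 : Measurable (fun w : Euc n × (ℝ × Euc n) => F w.2.1 w.2.2) :=
        hF.comp measurable_snd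
      exact (h1.pow_const m).mul (h2.pow_const P)
    have hX : ∀ x, ∫⁻ τ, ∫⁻ y, k τ (x - y) ^ m * F τ y ^ P ∂volume ∂ρ =
        ∫⁻ z, k z.1 (x - z.2) ^ m * F z.1 z.2 ^ P ∂(ρ.prod volume) := by
      intro x
      rw [lintegral_prod]
      exact (hkm.comp (measurable_const.prodMk measurable_id)).aemeasurable
    calc _ ≤ (∫⁻ x, (∫⁻ τ, ∫⁻ y, k τ (x - y) ^ m * F τ y ^ P ∂volume ∂ρ) * A ^ Q.toReal) ^ β := by
          gcongr with x
          refine (ENNReal.rpow_le_rpow (hpt x) hQr.le).trans ?_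
          rw [mul_assoc, ENNReal.mul_rpow_of_nonneg _ _ hQr.le, ← ENNReal.rpow_mul, hβQ,
            ENNReal.rpow_one]
      _ = ((∫⁻ x, (∫⁻ τ, ∫⁻ y, k τ (x - y) ^ m * F τ y ^ P ∂volume ∂ρ)) * A ^ Q.toReal) ^ β := by
          rw [lintegral_mul_const]
          simp_rw [hX]
          exact Measurable.lintegral_prod_right' hkm
      _ ≤ ((B * M * ρ univ) * A ^ Q.toReal) ^ β := by
          gcongr
          simp_rw [hX]
          rw [lintegral_lintegral_swap hkm.aemeasurable, lintegral_prod]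
          · calc _ ≤ ∫⁻ τ, B * M ∂ρ := by
                  refine lintegral_mono_ae ?_
                  filter_upwards [hB, hM] with τ h1 h2
                  have hkτ : Measurable (k τ) := hk.comp measurable_prodMk_left
                  have hFτ : Measurable (F τ) := hF.comp measurable_prodMk_left
                  calc _ = ∫⁻ y, (∫⁻ z, k τ z ^ m) * F τ y ^ P := by
                        refine lintegral_congr fun y => ?_
                        rw [lintegral_mul_const, lintegral_sub_right_eq_self (fun z => k τ z ^ m) y]
                        exact (hkτ.comp (measurable_id.sub_const y)).pow_const m
                    _ = (∫⁻ z, k τ z ^ m) * ∫⁻ y, F τ y ^ P :=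
                        lintegral_const_mul _ (hFτ.pow_const P)
                    _ ≤ _ := mul_le_mul' h1 h2
              _ = _ := lintegral_const _
          · exact (Measurable.lintegral_prod_left' hkm).aemeasurable
      _ = _ := by
          rw [ENNReal.mul_rpow_of_nonneg _ _ hβ, ← ENNReal.rpow_mul, mul_comm Q.toReal, hβQ,
            ENNReal.rpow_one]

/-- the middle region -/
def nearSet (n : ℕ) (k : ℤ) : Set (Euc n) :=
  {y : Euc n | (2 : ℝ) ^ (k - 2) ≤ ‖y‖ ∧ ‖y‖ < (2 : ℝ) ^ (k + 1)}

lemma measurableSet_nearSet (n : ℕ) (k : ℤ) : MeasurableSet (nearSet n k) := by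
  unfold nearSet
  exact (measurableSet_le measurable_const measurable_norm).inter
    (measurableSet_lt measurable_norm measurable_const)

lemma nearSet_subset (n : ℕ) (k : ℤ) :
    nearSet n k ⊆ (annulus n (k - 1) ∪ annulus n k) ∪ annulus n (k + 1) := by
  intro y hy
  obtain ⟨h1, h2⟩ := hy
  by_cases ha : ‖y‖ < (2 : ℝ) ^ (k - 1)
  · refine Or.inl (Or.inl ⟨?_, ha⟩)
    rwa [show k - 1 - 1 = k - 2 by ring]
  · by_cases hb : ‖y‖ < (2 : ℝ) ^ k
    · exact Or.inl (Or.inr ⟨not_lt.1 ha, hb⟩)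
    · refine Or.inr ⟨?_, h2⟩
      rw [show k + 1 - 1 = k by ring]
      exact not_lt.1 hb

lemma measurable_duhamel (n : ℕ) (t : ℝ) (A : Set (Euc n)) (F : ℝ → Euc n → ℝ≥0∞)
    (hF : Measurable (Function.uncurry F)) :
    Measurable (fun x : Euc n => ∫⁻ τ in Ioo 0 t, ∫⁻ y in A,
      ENNReal.ofReal (heatKernel n (t - τ) x y) * F τ y) := by
  have h2 : Measurable (fun w : (Euc n × ℝ) × Euc n => F w.1.2 w.2) :=
    hF.comp (f := fun w : (Euc n × ℝ) × Euc n => (w.1.2, w.2)) (by fun_prop)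
  have h1 : Measurable (fun w : (Euc n × ℝ) × Euc n =>
      ENNReal.ofReal (heatKernel n (t - w.1.2) w.1.1 w.2)) := by
    unfold heatKernel
    fun_prop
  exact Measurable.lintegral_prod_right' (f := fun u : Euc n × ℝ => ∫⁻ y in A,
    ENNReal.ofReal (heatKernel n (t - u.2) u.1 y) * F u.2 y)
    (Measurable.lintegral_prod_right' (h1.mul h2))

lemma exists_P (n : ℕ) (hn : 3 ≤ n) (p : ℝ≥0∞) (hp : 1 ≤ p) : ∃ P : ℝ, 1 ≤ P ∧
    ENNReal.ofReal P ≤ p ∧ (p⁻¹).toReal ≤ 1 / P ∧ (1 / P = (p⁻¹).toReal ∨ 1 / P = 1 / (n : ℝ)) := by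
  have hn' : (1 : ℝ) ≤ n := by exact_mod_cast (show 1 ≤ n by omega)
  by_cases h : p ≤ n
  · have hpt : p ≠ ⊤ := (h.trans_lt (by simp)).ne
    refine ⟨p.toReal, ?_, ?_, ?_, ?_⟩
    · simpa using ENNReal.toReal_mono hpt hp
    · rw [ENNReal.ofReal_toReal hpt]
    · rw [ENNReal.toReal_inv, one_div]
    · left; rw [ENNReal.toReal_inv, one_div]
  · push Not at h
    refine ⟨n, hn', ?_, ?_, Or.inr rfl⟩
    · simpa using h.le
    · have := ENNReal.toReal_mono (a := p⁻¹) (b := (n : ℝ≥0∞)⁻¹)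
        (ENNReal.inv_ne_top.2 (by simp; omega)) (ENNReal.inv_le_inv.2 h.le)
      rw [one_div]
      simpa [ENNReal.toReal_inv] using this

lemma near_Lp (n : ℕ) (μ : ℝ) (p : ℝ≥0∞) (P : ℝ) (hP : 1 ≤ P) (hPp : ENNReal.ofReal P ≤ p) :
    ∃ c : ℝ≥0∞, c ≠ ⊤ ∧ ∀ (k : ℤ) (G : Euc n → ℝ≥0∞) (M : ℝ≥0∞), Measurable G →
    (∀ j : ℤ, pw ((j : ℝ) * μ) * eLpNorm ((annulus n j).indicator G) p volume ≤ M) →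
    ∫⁻ y, ((nearSet n k).indicator G y) ^ P ≤
      (c * pw (k * (n * (1 / P - (p⁻¹).toReal) - μ)) * M) ^ P := by
  obtain ⟨c, hc, h⟩ := annulus_emb n (ENNReal.ofReal P) p hPp
  have hP0 : 0 < P := by linarith
  set X := n * (1 / P - (p⁻¹).toReal) - μ with hX
  have hPinv : ((ENNReal.ofReal P)⁻¹).toReal = 1 / P := by
    rw [ENNReal.toReal_inv, ENNReal.toReal_ofReal hP0.le, one_div]
  refine ⟨3 ^ (1 / P) * c * pw |X|, by
    refine ENNReal.mul_ne_top (ENNReal.mul_ne_top ?_ hc) (pw_ne_top _)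
    exact ENNReal.rpow_ne_top_of_nonneg (by positivity) (by norm_num), ?_⟩
  intro k G M hG hM
  have hann : ∀ j : ℤ, |(j : ℝ) - k| ≤ 1 →
      ∫⁻ y in annulus n j, G y ^ P ≤ (c * pw |X| * pw (k * X) * M) ^ P := by
    intro j hj
    have e1 : ∫⁻ y in annulus n j, G y ^ P =
        (eLpNorm ((annulus n j).indicator G) (ENNReal.ofReal P) volume) ^ P := by
      rw [eLpNorm_indicator_eq_eLpNorm_restrict (measurableSet_annulus n j),
        eLpNorm_eq_lintegral_rpow_enorm_toReal (by simpa using hP0) (by simp),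
        ENNReal.toReal_ofReal hP0.le, ← ENNReal.rpow_mul, one_div_mul_cancel hP0.ne',
        ENNReal.rpow_one]
      simp
    rw [e1]
    apply ENNReal.rpow_le_rpow _ hP0.le
    refine (h j G hG).trans ?_
    rw [hPinv]
    have e2 : eLpNorm ((annulus n j).indicator G) p volume ≤ pw (-((j : ℝ) * μ)) * M := by
      calc _ = pw (-((j : ℝ) * μ)) * (pw ((j : ℝ) * μ) *
            eLpNorm ((annulus n j).indicator G) p volume) := by
            rw [← mul_assoc, ← pw_add]; simp [pw_zero]
        _ ≤ _ := by gcongr; exact hM j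
    calc _ ≤ c * pw (j * (n * (1 / P - (p⁻¹).toReal))) * (pw (-((j : ℝ) * μ)) * M) := by gcongr
      _ = c * pw (j * X) * M := by
          have : (j : ℝ) * X = j * (n * (1 / P - (p⁻¹).toReal)) + -((j : ℝ) * μ) := by
            rw [hX]; ring
          rw [this, pw_add]; ring
      _ ≤ c * pw (|X| + k * X) * M := by
          gcongr
          apply pw_mono
          have : ((j : ℝ) - k) * X ≤ |X| := by
            calc _ ≤ |((j : ℝ) - k) * X| := le_abs_self _
              _ = |(j : ℝ) - k| * |X| := abs_mul _ _
              _ ≤ 1 * |X| := by gcongr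
              _ = _ := one_mul _
          linarith
      _ = _ := by rw [pw_add]; ring
  calc _ = ∫⁻ y in nearSet n k, G y ^ P := by
        rw [← lintegral_indicator (measurableSet_nearSet n k)]
        refine lintegral_congr fun y => ?_
        by_cases hy : y ∈ nearSet n k
        · simp [indicator_of_mem hy]
        · simp [indicator_of_notMem hy, hP0]
    _ ≤ ∫⁻ y in (annulus n (k - 1) ∪ annulus n k) ∪ annulus n (k + 1), G y ^ P :=
        lintegral_mono_set (nearSet_subset n k)
    _ ≤ (∫⁻ y in annulus n (k - 1), G y ^ P) + (∫⁻ y in annulus n k, G y ^ P) +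
        ∫⁻ y in annulus n (k + 1), G y ^ P :=
        (lintegral_union_le _ _ _).trans (by gcongr; exact lintegral_union_le _ _ _)
    _ ≤ (c * pw |X| * pw (k * X) * M) ^ P + (c * pw |X| * pw (k * X) * M) ^ P +
        (c * pw |X| * pw (k * X) * M) ^ P := by
        gcongr
        · apply hann; push_cast; simp
        · apply hann; simp
        · apply hann; push_cast; simp
    _ = 3 * (c * pw |X| * pw (k * X) * M) ^ P := by ring
    _ = _ := by
        have : 3 ^ (1 / P) * c * pw |X| * pw (k * X) * M =
          3 ^ (1 / P) * (c * pw |X| * pw (k * X) * M) := by ring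
        rw [this, ENNReal.mul_rpow_of_nonneg (3 ^ (1 / P)) _ hP0.le, ← ENNReal.rpow_mul,
          one_div_mul_cancel hP0.ne', ENNReal.rpow_one]

lemma heatKernel_sub (n : ℕ) (s : ℝ) (x y : Euc n) :
    heatKernel n s x y = heatKernel n s (x - y) 0 := by
  simp [heatKernel]

lemma near_conv (n : ℕ) (hn : 3 ≤ n) (P m θ : ℝ) (Q : ℝ≥0∞) (hQ : 1 ≤ Q) (hP : 1 ≤ P)
    (hβP : (Q⁻¹).toReal ≤ 1 / P) (hm1 : 1 ≤ m)
    (hm : m * (1 - 1 / P + (Q⁻¹).toReal) = 1) (hθ1 : θ < 1) (hmθ : ((n : ℝ) - 2 * θ) * m = n) :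
    ∃ c : ℝ≥0∞, c ≠ ⊤ ∧ ∀ (k : ℤ) (t : ℝ) (F : ℝ → Euc n → ℝ≥0∞) (M : ℝ≥0∞),
    Measurable (Function.uncurry F) →
    (∀ τ ∈ Ioo 0 t, ∫⁻ y, ((nearSet n k).indicator (F τ) y) ^ P ≤ M ^ P) →
    eLpNorm ((annulus n k).indicator (fun x => ∫⁻ τ in Ioo 0 t, ∫⁻ y in nearSet n k,
      ENNReal.ofReal (heatKernel n (t - τ) x y) * F τ y)) Q volume ≤
      c * pw (k * (2 - 2 * θ)) * M := by
  obtain ⟨cN, hcN, hN⟩ := heat_near n m θ hm1 hmθ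
  obtain ⟨cT, hcT, hT⟩ := psi_time n hn θ hθ1
  have hP0 : 0 < P := by linarith
  have hm0 : 0 < m := by linarith
  have hpos : 0 ≤ 1 - 1 / P + (Q⁻¹).toReal := by
    by_contra hcon
    push Not at hcon
    nlinarith
  refine ⟨cT * cN ^ (1 - 1 / P + (Q⁻¹).toReal),
    ENNReal.mul_ne_top hcT (ENNReal.rpow_ne_top_of_nonneg hpos hcN), ?_⟩
  intro k t F M hF hM
  set R : ℝ := (2 : ℝ) ^ k with hR
  have hR0 : 0 < R := by positivity
  set w : ℝ → ℝ≥0∞ := fun τ => ENNReal.ofReal (psi n θ R (t - τ)) with hw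
  have hwm : Measurable w := ((measurable_psi n θ R).comp (by fun_prop)).ennreal_ofReal
  set ρ : Measure ℝ := (volume.restrict (Ioo 0 t)).withDensity w with hρ
  have hρu : ρ univ ≤ cT * pw (k * (2 - 2 * θ)) := by
    rw [hρ, withDensity_apply _ MeasurableSet.univ, Measure.restrict_univ]
    refine (hT R hR0 t).trans ?_
    rw [hR, two_zpow_eq, ← Real.rpow_mul (by norm_num), ofReal_two_rpow]
  have hw0 : ∀ τ ∈ Ioo 0 t, w τ ≠ 0 := by
    intro τ hτ
    have := psi_pos n θ R (t - τ) hR0 (by linarith [hτ.2])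
    simpa [hw] using this
  have hwt : ∀ τ, w τ ≠ ⊤ := fun τ => ENNReal.ofReal_ne_top
  set kk : ℝ → Euc n → ℝ≥0∞ := fun τ z => (Metric.ball (0 : Euc n) (4 * R)).indicator
        (fun z => ENNReal.ofReal (heatKernel n (t - τ) z 0)) z * (w τ)⁻¹ with hkk
  set F' : ℝ → Euc n → ℝ≥0∞ := fun τ y => (nearSet n k).indicator (F τ) y with hF'
  have hkkm : Measurable (Function.uncurry kk) := by
    have h1 : Measurable (fun z : ℝ × Euc n => ENNReal.ofReal (heatKernel n (t - z.1) z.2 0)) := by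
      unfold heatKernel
      fun_prop
    have h2 : Measurable ((Prod.snd ⁻¹' (Metric.ball (0 : Euc n) (4 * R))).indicator
      (fun z : ℝ × Euc n => ENNReal.ofReal (heatKernel n (t - z.1) z.2 0))) :=
      h1.indicator (measurable_snd measurableSet_ball)
    exact h2.mul (hwm.inv.comp measurable_fst)
  have hF'm : Measurable (Function.uncurry F') := by
    have h2 : Measurable ((Prod.snd ⁻¹' (nearSet n k)).indicator
      (fun z : ℝ × Euc n => F z.1 z.2)) :=
      Measurable.indicator hF (measurable_snd (measurableSet_nearSet n k))
    exact h2
  have hae : ∀ᵐ τ ∂ρ, τ ∈ Ioo 0 t :=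
    (withDensity_absolutelyContinuous _ _).ae_le (ae_restrict_mem measurableSet_Ioo)
  have hmain := ym_norm n ρ P m Q hQ hP hβP hm kk F' hkkm hF'm cN (M ^ P) (by
    filter_upwards [hae] with τ hτ
    have hwm0 : w τ ^ m ≠ 0 := by
      simp [ENNReal.rpow_eq_zero_iff, hw0 τ hτ, hwt τ]
    have hwmt : w τ ^ m ≠ ⊤ := ENNReal.rpow_ne_top_of_nonneg hm0.le (hwt τ)
    calc ∫⁻ y, kk τ y ^ m = ∫⁻ y, ((w τ) ^ m)⁻¹ * ((Metric.ball (0 : Euc n) (4 * R)).indicator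
        (fun z => ENNReal.ofReal (heatKernel n (t - τ) z 0)) y) ^ m := by
          refine lintegral_congr fun y => ?_
          simp only [hkk]
          rw [ENNReal.mul_rpow_of_nonneg _ _ hm0.le, ENNReal.inv_rpow, mul_comm]
      _ = ((w τ) ^ m)⁻¹ * ∫⁻ y, ((Metric.ball (0 : Euc n) (4 * R)).indicator
        (fun z => ENNReal.ofReal (heatKernel n (t - τ) z 0)) y) ^ m :=
          lintegral_const_mul' _ _ (ENNReal.inv_ne_top.2 hwm0)
      _ ≤ ((w τ) ^ m)⁻¹ * (cN * w τ ^ m) := by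
          gcongr
          exact hN R (t - τ) hR0 (by linarith [hτ.2])
      _ = cN := by
          rw [mul_comm, mul_assoc, ENNReal.mul_inv_cancel hwm0 hwmt, mul_one]) (by
    filter_upwards [hae] with τ hτ
    exact hM τ hτ)
  calc _ ≤ eLpNorm (fun x => ∫⁻ τ, ∫⁻ y, kk τ (x - y) * F' τ y ∂volume ∂ρ) Q volume := by
        refine eLpNorm_mono_enorm fun x => ?_
        simp only [enorm_eq_self]
        by_cases hx : x ∈ annulus n k
        · rw [indicator_of_mem hx, hρ, lintegral_withDensity_eq_lintegral_mul _ hwm]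
          · refine setLIntegral_mono' measurableSet_Ioo fun τ hτ => ?_
            simp only [Pi.mul_apply]
            rw [← lintegral_const_mul' _ _ (hwt τ),
              ← lintegral_indicator (measurableSet_nearSet n k)]
            refine lintegral_mono fun y => ?_
            by_cases hy : y ∈ nearSet n k
            · have hb : x - y ∈ Metric.ball (0 : Euc n) (4 * R) := by
                rw [mem_ball_zero_iff]
                have h1 := norm_sub_le x y
                have h2 := hx.2
                have h3 := hy.2
                rw [zpow_add_one₀ (by norm_num)] at h3
                rw [← hR] at h2 h3
                linarith
              simp only [hkk, hF', indicator_of_mem hy, indicator_of_mem hb]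
              rw [heatKernel_sub n _ x y]
              apply le_of_eq
              have : w τ * (w τ)⁻¹ = 1 := ENNReal.mul_inv_cancel (hw0 τ hτ) (hwt τ)
              calc _ = (w τ * (w τ)⁻¹) *
                    (ENNReal.ofReal (heatKernel n (t - τ) (x - y) 0) * F τ y) := by
                    rw [this, one_mul]
                _ = _ := by ring
            · simp [indicator_of_notMem hy]
          · have : Measurable (fun z : ℝ × Euc n => kk z.1 (x - z.2) * F' z.1 z.2) :=
              (hkkm.comp (f := fun z : ℝ × Euc n => (z.1, x - z.2)) (by fun_prop)).mul hF'm
            exact this.lintegral_prod_right'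
        · rw [indicator_of_notMem hx]; exact zero_le
    _ ≤ _ := hmain
    _ ≤ (cT * pw (k * (2 - 2 * θ))) * cN ^ (1 - 1 / P + (Q⁻¹).toReal) * M := by
        rw [← ENNReal.rpow_mul, mul_one_div_cancel hP0.ne', ENNReal.rpow_one]
        gcongr
    _ = _ := by ring

lemma near_lemma (n : ℕ) (hn : 3 ≤ n) (μ ν : ℝ) (p q : ℝ≥0∞) (hp : 1 ≤ p)
    (hμν : ν < μ) (hh : ν + n * (q⁻¹).toReal = μ + n * (p⁻¹).toReal - 2) :
    ∃ c : ℝ≥0∞, c ≠ ⊤ ∧ ∀ (k : ℤ) (t : ℝ) (F : ℝ → Euc n → ℝ≥0∞) (M : ℝ≥0∞),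
    Measurable (Function.uncurry F) →
    (∀ τ ∈ Ioo 0 t, ∀ j : ℤ, pw ((j : ℝ) * μ) *
      eLpNorm ((annulus n j).indicator (F τ)) p volume ≤ M) →
    pw ((k : ℝ) * ν) * eLpNorm ((annulus n k).indicator
      (fun x => ∫⁻ τ in Ioo 0 t, ∫⁻ y in nearSet n k,
      ENNReal.ofReal (heatKernel n (t - τ) x y) * F τ y)) q volume ≤ c * M := by
  have hn' : (3 : ℝ) ≤ n := by exact_mod_cast hn
  have hn0 : (0 : ℝ) < n := by linarith
  obtain ⟨P, hP, hPp, hpP, hPor⟩ := exists_P n hn p hp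
  obtain ⟨Q, hpQ, hqQ, hQor⟩ : ∃ Q : ℝ≥0∞, p ≤ Q ∧ q ≤ Q ∧ (Q = p ∨ Q = q) := by
    rcases le_total p q with h | h
    · exact ⟨q, h, le_rfl, Or.inr rfl⟩
    · exact ⟨p, le_rfl, h, Or.inl rfl⟩
  have hQ : 1 ≤ Q := hp.trans hpQ
  have hp0 : p ≠ 0 := (zero_lt_one.trans_le hp).ne'
  have hβp : (Q⁻¹).toReal ≤ (p⁻¹).toReal :=
    ENNReal.toReal_mono (ENNReal.inv_ne_top.2 hp0) (ENNReal.inv_le_inv.2 hpQ)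
  have hβ0 : 0 ≤ (Q⁻¹).toReal := ENNReal.toReal_nonneg
  have hgap : n * (1 / P - (Q⁻¹).toReal) < 2 := by
    rcases hPor with h | h
    · rw [h]
      rcases hQor with h' | h'
      · rw [h']; simp
      · rw [h']; linarith
    · rw [h, mul_sub, mul_one_div_cancel hn0.ne']
      have : 0 ≤ n * (Q⁻¹).toReal := by positivity
      linarith
  set β := (Q⁻¹).toReal with hβ
  have hden : 0 < 1 - 1 / P + β := by nlinarith
  have hβP : β ≤ 1 / P := hβp.trans hpP
  obtain ⟨cP, hcP, h1⟩ := near_Lp n μ p P hP hPp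
  obtain ⟨cQ, hcQ, h2⟩ := annulus_emb n q Q hqQ
  obtain ⟨cC, hcC, h3⟩ := near_conv n hn P (1 / (1 - 1 / P + β)) (n * (1 / P - β) / 2) Q hQ hP
    hβP (by rw [le_div_iff₀ hden]; linarith) (by rw [one_div_mul_cancel hden.ne'])
    (by linarith) (by
      rw [mul_one_div, div_eq_iff hden.ne']; ring)
  refine ⟨cQ * cC * cP, ENNReal.mul_ne_top (ENNReal.mul_ne_top hcQ hcC) hcP, ?_⟩
  intro k t F M hF hM
  have hFτ : ∀ τ, Measurable (F τ) := fun τ => hF.comp measurable_prodMk_left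
  have h3' := h3 k t F _ hF (fun τ hτ => h1 k (F τ) M (hFτ τ) (hM τ hτ))
  have h2' := h2 k _ (measurable_duhamel n t (nearSet n k) F hF)
  calc _ ≤ pw (k * ν) * (cQ * pw (k * (n * ((q⁻¹).toReal - β))) *
        (cC * pw (k * (2 - 2 * (n * (1 / P - β) / 2))) *
          (cP * pw (k * (n * (1 / P - (p⁻¹).toReal) - μ)) * M))) := by
        gcongr
        exact h2'.trans (by gcongr)
    _ = cQ * cC * cP * M * (pw (k * ν) * pw (k * (n * ((q⁻¹).toReal - β))) *
          pw (k * (2 - 2 * (n * (1 / P - β) / 2))) *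
          pw (k * (n * (1 / P - (p⁻¹).toReal) - μ))) := by ring
    _ = cQ * cC * cP * M * pw 0 := by
        rw [← pw_add, ← pw_add, ← pw_add]
        congr 2
        linear_combination (k : ℝ) * hh
    _ = _ := by rw [pw_zero, mul_one]

lemma annulus_L1 (n : ℕ) (μ : ℝ) (p : ℝ≥0∞) (hp : 1 ≤ p) :
    ∃ c : ℝ≥0∞, c ≠ ⊤ ∧ ∀ (j : ℤ) (G : Euc n → ℝ≥0∞), Measurable G →
    ∫⁻ y in annulus n j, G y ≤ c * pw (j * (n * (1 - (p⁻¹).toReal) - μ)) *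
      (pw ((j : ℝ) * μ) * eLpNorm ((annulus n j).indicator G) p volume) := by
  obtain ⟨c, hc, h⟩ := annulus_emb n 1 p hp
  refine ⟨c, hc, fun j G hG => ?_⟩
  have e1 : ∫⁻ y in annulus n j, G y = eLpNorm ((annulus n j).indicator G) 1 volume := by
    rw [eLpNorm_indicator_eq_eLpNorm_restrict (measurableSet_annulus n j),
      eLpNorm_one_eq_lintegral_enorm]
    simp
  rw [e1]
  refine (h j G hG).trans (le_of_eq ?_)
  have : (j : ℝ) * (n * ((1 : ℝ≥0∞)⁻¹.toReal - (p⁻¹).toReal)) =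
      (j * (n * (1 - (p⁻¹).toReal) - μ)) + (j : ℝ) * μ := by simp; ring
  rw [this, pw_add]; ring

lemma ball_subset (n : ℕ) (k : ℤ) : Metric.ball (0 : Euc n) ((2 : ℝ) ^ (k - 2)) ⊆
    {0} ∪ ⋃ i : ℕ, annulus n (k - 2 - i) := by
  intro y hy
  rw [mem_ball_zero_iff] at hy
  by_cases h0 : y = 0
  · exact Or.inl h0
  right
  obtain ⟨l, hl1, hl2⟩ := exists_mem_Ico_zpow (x := ‖y‖) (y := 2) (norm_pos_iff.2 h0) (by norm_num)
  have hlk : l < k - 2 := (zpow_lt_zpow_iff_right₀ (by norm_num)).1 (hl1.trans_lt hy)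
  refine mem_iUnion.2 ⟨(k - 2 - (l + 1)).toNat, ?_⟩
  have : k - 2 - ((k - 2 - (l + 1)).toNat : ℤ) = l + 1 := by omega
  rw [this]
  refine ⟨?_, hl2⟩
  rwa [show l + 1 - 1 = l by ring]

lemma high_subset (n : ℕ) (k : ℤ) : {y : Euc n | (2 : ℝ) ^ (k + 1) ≤ ‖y‖} ⊆
    ⋃ i : ℕ, annulus n (k + 2 + i) := by
  intro y hy
  have hy' : (2 : ℝ) ^ (k + 1) ≤ ‖y‖ := hy
  have hy0 : 0 < ‖y‖ := lt_of_lt_of_le (by positivity) hy'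
  obtain ⟨l, hl1, hl2⟩ := exists_mem_Ico_zpow (x := ‖y‖) (y := 2) hy0 (by norm_num)
  have hlk : k + 1 < l + 1 := (zpow_lt_zpow_iff_right₀ (by norm_num)).1 (hy'.trans_lt hl2)
  refine mem_iUnion.2 ⟨(l + 1 - (k + 2)).toNat, ?_⟩
  have : k + 2 + ((l + 1 - (k + 2)).toNat : ℤ) = l + 1 := by omega
  rw [this]
  refine ⟨?_, hl2⟩
  rwa [show l + 1 - 1 = l by ring]

lemma low_sum (n : ℕ) (hn : 3 ≤ n) (μ : ℝ) (p r : ℝ≥0∞) (hp : 1 ≤ p) (hr : 0 < r) (N : ℝ)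
    (hN : N = n * (1 - (p⁻¹).toReal) - μ) (hN0 : 0 ≤ N) (hcase : 0 < N ∨ r ≤ 1) :
    ∃ c : ℝ≥0∞, c ≠ ⊤ ∧ ∀ (k : ℤ) (h : Euc n → ℝ), Measurable h →
    ∫⁻ y in Metric.ball (0 : Euc n) ((2 : ℝ) ^ (k - 2)), ‖h y‖ₑ ≤
      c * pw (k * N) * herzNorm n μ p r h := by
  haveI : NeZero n := ⟨by omega⟩
  obtain ⟨c, hc, hL⟩ := annulus_L1 n μ p hp
  rw [← hN] at hL
  have key : ∀ (k : ℤ) (h : Euc n → ℝ), Measurable h →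
      ∫⁻ y in Metric.ball (0 : Euc n) ((2 : ℝ) ^ (k - 2)), ‖h y‖ₑ ≤
      ∑' i : ℕ, c * pw (k * N) * (pw (-(i * N)) * (pw (((k - 2 - i : ℤ) : ℝ) * μ) *
        eLpNorm ((annulus n (k - 2 - i)).indicator (fun y => ‖h y‖ₑ)) p volume)) := by
    intro k h hh
    calc _ ≤ ∫⁻ y in {0} ∪ ⋃ i : ℕ, annulus n (k - 2 - i), ‖h y‖ₑ :=
          lintegral_mono_set (ball_subset n k)
      _ ≤ (∫⁻ y in {0}, ‖h y‖ₑ) + ∫⁻ y in ⋃ i : ℕ, annulus n (k - 2 - i), ‖h y‖ₑ :=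
          lintegral_union_le _ _ _
      _ = ∫⁻ y in ⋃ i : ℕ, annulus n (k - 2 - i), ‖h y‖ₑ := by
          rw [setLIntegral_measure_zero _ _ (by simp), zero_add]
      _ ≤ ∑' i : ℕ, ∫⁻ y in annulus n (k - 2 - i), ‖h y‖ₑ := lintegral_iUnion_le _ _
      _ ≤ _ := by
          refine ENNReal.tsum_le_tsum fun i => ?_
          refine (hL _ _ hh.enorm).trans ?_
          rw [mul_assoc c (pw (k * N)), ← mul_assoc (pw (k * N)), ← pw_add, ← mul_assoc c]
          gcongr
          apply pw_mono
          push_cast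
          nlinarith
  rcases hcase with hN1 | hr1
  · refine ⟨c * ∑' i : ℕ, pw (-((i : ℝ) * N)), ENNReal.mul_ne_top hc (pw_geom hN1),
      fun k h hh => (key k h hh).trans ?_⟩
    calc _ ≤ ∑' i : ℕ, c * pw (k * N) * (pw (-(i * N)) * herzNorm n μ p r h) := by
          refine ENNReal.tsum_le_tsum fun i => ?_
          gcongr
          exact herz_term_le n μ p r hr h _
      _ = _ := by rw [ENNReal.tsum_mul_left, ENNReal.tsum_mul_right]; ring
  · refine ⟨c, hc, fun k h hh => (key k h hh).trans ?_⟩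
    rw [ENNReal.tsum_mul_left]
    gcongr
    refine le_trans ?_ (herz_sum_le n μ p r hr hr1 h)
    refine le_trans (ENNReal.tsum_le_tsum fun i => ?_)
      (ENNReal.tsum_comp_le_tsum_of_injective (f := fun i : ℕ => k - 2 - (i : ℤ))
        (fun a b hab => by simpa using hab) _)
    have : pw (-((i : ℝ) * N)) ≤ 1 := by
      rw [← pw_zero]
      apply pw_mono
      have : 0 ≤ (i : ℝ) * N := by positivity
      linarith
    calc _ ≤ 1 * _ := mul_le_mul' this le_rfl
      _ = _ := one_mul _

lemma univ_cover (n : ℕ) (k : ℤ) : (univ : Set (Euc n)) ⊆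
    (Metric.ball (0 : Euc n) ((2 : ℝ) ^ (k - 2)) ∪ ⋃ i : ℕ, annulus n (k + 2 + i)) ∪
      nearSet n k := by
  intro y _
  by_cases h1 : ‖y‖ < (2 : ℝ) ^ (k - 2)
  · exact Or.inl (Or.inl (by simpa using h1))
  · by_cases h2 : ‖y‖ < (2 : ℝ) ^ (k + 1)
    · exact Or.inr ⟨not_lt.1 h1, h2⟩
    · exact Or.inl (Or.inr (high_subset n k (not_lt.1 h2)))

lemma zpow_rpow_ofReal (l : ℤ) (a : ℝ) :
    ENNReal.ofReal (((2 : ℝ) ^ l) ^ a) = pw (l * a) := by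
  rw [two_zpow_eq, ← Real.rpow_mul (by norm_num), ofReal_two_rpow]

/-- pointwise estimate: far contributions bounded by a constant on each annulus -/
lemma pointwise_bound (n : ℕ) (hn : 3 ≤ n) (μ : ℝ) (p : ℝ≥0∞) (hp : 1 ≤ p) (N1 N2 : ℝ)
    (hN1 : N1 = n * (1 - (p⁻¹).toReal) - μ) (hN12 : N1 + N2 = n - 2) (hN2 : 0 < N2)
    (cL : ℝ≥0∞) (hcL : cL ≠ ⊤) :
    ∃ c : ℝ≥0∞, c ≠ ⊤ ∧ ∀ (k : ℤ) (t : ℝ) (F : ℝ → Euc n → ℝ≥0∞) (M : ℝ≥0∞),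
    Measurable (Function.uncurry F) →
    (∀ τ ∈ Ioo 0 t, ∀ j : ℤ, pw ((j : ℝ) * μ) *
      eLpNorm ((annulus n j).indicator (F τ)) p volume ≤ M) →
    (∀ τ ∈ Ioo 0 t, ∫⁻ y in Metric.ball (0 : Euc n) ((2 : ℝ) ^ (k - 2)), F τ y ≤
      cL * pw (k * N1) * M) →
    ∀ x ∈ annulus n k,
      ∫⁻ τ in Ioo 0 t, ∫⁻ y, ENNReal.ofReal (heatKernel n (t - τ) x y) * F τ y ≤
      c * pw (-(k * N2)) * M + ∫⁻ τ in Ioo 0 t, ∫⁻ y in nearSet n k,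
        ENNReal.ofReal (heatKernel n (t - τ) x y) * F τ y := by
  obtain ⟨cF, hcF, hFar⟩ := far_lemma n hn
  obtain ⟨c1, hc1, hL1⟩ := annulus_L1 n μ p hp
  rw [← hN1] at hL1
  refine ⟨cF * cL * pw (-2 * (2 - n)) +
    cF * c1 * pw (2 * N1) * ∑' i : ℕ, pw (-((i : ℝ) * N2)), ?_, ?_⟩
  · refine ENNReal.add_ne_top.2 ⟨?_, ?_⟩
    · exact ENNReal.mul_ne_top (ENNReal.mul_ne_top hcF hcL) (pw_ne_top _)
    · exact ENNReal.mul_ne_top (ENNReal.mul_ne_top (ENNReal.mul_ne_top hcF hc1) (pw_ne_top _))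
        (pw_geom hN2)
  intro k t F M hF hM hlow x hx
  have hFτ : ∀ τ, Measurable (F τ) := fun τ => hF.comp measurable_prodMk_left
  have hmeas : ∀ A : Set (Euc n), Measurable (fun τ => ∫⁻ y in A,
      ENNReal.ofReal (heatKernel n (t - τ) x y) * F τ y) := by
    intro A
    exact Measurable.lintegral_prod_right' ((measurable_heat n t x).mul hF)
  have hLow : ∫⁻ τ in Ioo 0 t, ∫⁻ y in Metric.ball (0 : Euc n) ((2 : ℝ) ^ (k - 2)),
      ENNReal.ofReal (heatKernel n (t - τ) x y) * F τ y ≤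
      cF * cL * pw (-2 * (2 - n)) * pw (-(k * N2)) * M := by
    refine (hFar ((2 : ℝ) ^ (k - 2)) t x _ F _ (by positivity) measurableSet_ball ?_ hlow
      hFτ).trans (le_of_eq ?_)
    · intro y hy
      rw [mem_ball_zero_iff] at hy
      have h1 := hx.1
      have h2 := norm_sub_norm_le x y
      have h3 : (2 : ℝ) ^ (k - 1) = 2 * (2 : ℝ) ^ (k - 2) := by
        rw [show k - 1 = (k - 2) + 1 by ring, zpow_add_one₀ (by norm_num), mul_comm]
      linarith
    · rw [zpow_rpow_ofReal]
      calc _ = cF * cL * M * (pw (((k - 2 : ℤ) : ℝ) * (2 - n)) * pw (k * N1)) := by ring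
        _ = cF * cL * M * (pw (-2 * (2 - n)) * pw (-(k * N2))) := by
            rw [← pw_add, ← pw_add]
            congr 2
            push_cast
            linear_combination (k : ℝ) * hN12
        _ = _ := by ring
  have hHigh : ∀ i : ℕ, ∫⁻ τ in Ioo 0 t, ∫⁻ y in annulus n (k + 2 + i),
      ENNReal.ofReal (heatKernel n (t - τ) x y) * F τ y ≤
      cF * c1 * pw (2 * N1) * pw (-(k * N2)) * M * pw (-((i : ℝ) * N2)) := by
    intro i
    refine (hFar ((2 : ℝ) ^ (k + i)) t x _ F (c1 * pw (((k + 2 + i : ℤ) : ℝ) * N1) * M)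
      (by positivity) (measurableSet_annulus n _) ?_ ?_ hFτ).trans (le_of_eq ?_)
    · intro y hy
      have h1 := hy.1
      have h2 := norm_sub_norm_le y x
      rw [norm_sub_rev] at h2
      have h3 : (2 : ℝ) ^ (k + 2 + i - 1) = 2 * (2 : ℝ) ^ (k + i) := by
        rw [show k + 2 + (i : ℤ) - 1 = (k + i) + 1 by ring, zpow_add_one₀ (by norm_num), mul_comm]
      have h4 : (2 : ℝ) ^ k ≤ (2 : ℝ) ^ (k + i) :=
        zpow_le_zpow_right₀ (by norm_num) (by omega)
      have h5 := hx.2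
      linarith
    · intro τ hτ
      refine (hL1 (k + 2 + i) (F τ) (hFτ τ)).trans ?_
      gcongr
      exact hM τ hτ _
    · rw [zpow_rpow_ofReal]
      calc _ = cF * c1 * M * (pw (((k + i : ℤ) : ℝ) * (2 - n)) *
              pw (((k + 2 + i : ℤ) : ℝ) * N1)) := by ring
        _ = cF * c1 * M * (pw (2 * N1) * pw (-(k * N2)) * pw (-((i : ℝ) * N2))) := by
            rw [← pw_add, ← pw_add, ← pw_add]
            congr 2
            push_cast
            linear_combination ((k : ℝ) + i) * hN12
        _ = _ := by ring
  calc _ ≤ ∫⁻ τ in Ioo 0 t, (((∫⁻ y in Metric.ball (0 : Euc n) ((2 : ℝ) ^ (k - 2)),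
        ENNReal.ofReal (heatKernel n (t - τ) x y) * F τ y) +
        ∑' i : ℕ, ∫⁻ y in annulus n (k + 2 + i),
          ENNReal.ofReal (heatKernel n (t - τ) x y) * F τ y) +
        ∫⁻ y in nearSet n k, ENNReal.ofReal (heatKernel n (t - τ) x y) * F τ y) := by
        refine lintegral_mono fun τ => ?_
        calc _ = ∫⁻ y in univ, ENNReal.ofReal (heatKernel n (t - τ) x y) * F τ y := by
              rw [setLIntegral_univ]
          _ ≤ _ := lintegral_mono_set (univ_cover n k)
          _ ≤ _ := lintegral_union_le _ _ _
          _ ≤ _ := by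
              gcongr
              refine (lintegral_union_le _ _ _).trans ?_
              gcongr
              exact lintegral_iUnion_le _ _
    _ = (∫⁻ τ in Ioo 0 t, ∫⁻ y in Metric.ball (0 : Euc n) ((2 : ℝ) ^ (k - 2)),
        ENNReal.ofReal (heatKernel n (t - τ) x y) * F τ y) +
        (∑' i : ℕ, ∫⁻ τ in Ioo 0 t, ∫⁻ y in annulus n (k + 2 + i),
          ENNReal.ofReal (heatKernel n (t - τ) x y) * F τ y) +
        ∫⁻ τ in Ioo 0 t, ∫⁻ y in nearSet n k,
          ENNReal.ofReal (heatKernel n (t - τ) x y) * F τ y := by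
        rw [lintegral_add_right _ (hmeas _), lintegral_add_left (hmeas _),
          lintegral_tsum (fun i => (hmeas _).aemeasurable)]
    _ ≤ cF * cL * pw (-2 * (2 - n)) * pw (-(k * N2)) * M +
        (∑' i : ℕ, cF * c1 * pw (2 * N1) * pw (-(k * N2)) * M * pw (-((i : ℝ) * N2))) +
        ∫⁻ τ in Ioo 0 t, ∫⁻ y in nearSet n k,
          ENNReal.ofReal (heatKernel n (t - τ) x y) * F τ y := by
        gcongr with i
        exact hHigh i
    _ = _ := by
        rw [ENNReal.tsum_mul_left]; ring

lemma enorm_duhamel_le (n : ℕ) (t : ℝ) (f : ℝ → Euc n → ℝ) (hf : Measurable (Function.uncurry f))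
    (x : Euc n) :
    ‖∫ z : ℝ × Euc n, heatKernel n (t - z.1) x z.2 * f z.1 z.2
      ∂((volume.restrict (Set.Ioo (0 : ℝ) t)).prod volume)‖ₑ ≤
    ∫⁻ τ in Ioo 0 t, ∫⁻ y, ENNReal.ofReal (heatKernel n (t - τ) x y) * ‖f τ y‖ₑ := by
  refine (enorm_integral_le_lintegral_enorm _).trans ?_
  have hm : Measurable (fun z : ℝ × Euc n => ‖heatKernel n (t - z.1) x z.2 * f z.1 z.2‖ₑ) := by
    have h1 : Measurable (fun z : ℝ × Euc n => heatKernel n (t - z.1) x z.2) := by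
      unfold heatKernel
      fun_prop
    exact (h1.mul hf).enorm
  rw [lintegral_prod _ hm.aemeasurable]
  refine setLIntegral_mono' measurableSet_Ioo fun τ hτ => ?_
  refine lintegral_mono fun y => ?_
  simp only
  rw [enorm_mul, Real.enorm_of_nonneg (heatKernel_nonneg n _ (by linarith [hτ.2]) x y)]

/-- Meyer's inequality on Herz spaces:
`‖∫₀ᵗ e^{(t-τ)Δ} f(τ) dτ‖_{K̇^ν_{q,∞}} ≲ sup_{0<τ<t} ‖f(τ)‖_{K̇^μ_{p,r}}`. -/
theorem meyer_inequality_herz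
    (n : ℕ) (hn : 3 ≤ n) (μ ν : ℝ) (p q r : ℝ≥0∞)
    (hp : 1 ≤ p) (hq : 1 ≤ q) (hr : 0 < r)
    (hμν : ν < μ)
    (h0 : 0 < ν / (n : ℝ) + (q⁻¹).toReal)
    (h1 : ν / (n : ℝ) + (q⁻¹).toReal < μ / (n : ℝ) + (p⁻¹).toReal)
    (h2 : μ / (n : ℝ) + (p⁻¹).toReal ≤ 1)
    (heq : ν / (n : ℝ) + (q⁻¹).toReal = (μ / (n : ℝ) + (p⁻¹).toReal) - 2 / (n : ℝ))
    (hcase : (p < ⊤ ∧ q < ⊤ ∧ μ / (n : ℝ) + (p⁻¹).toReal < 1) ∨ r ≤ 1) :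
    ∃ C : ℝ, 0 < C ∧ ∀ T : ℝ, 0 < T → ∀ t ∈ Set.Ioc (0 : ℝ) T,
      ∀ f : ℝ → Euc n → ℝ, Measurable (Function.uncurry f) →
        (∀ᵐ x : Euc n ∂volume,
          Integrable (fun z : ℝ × Euc n => heatKernel n (t - z.1) x z.2 * f z.1 z.2)
            ((volume.restrict (Set.Ioo (0 : ℝ) t)).prod volume)) →
        herzNorm n ν q ⊤ (fun x =>
            ∫ z : ℝ × Euc n, heatKernel n (t - z.1) x z.2 * f z.1 z.2
              ∂((volume.restrict (Set.Ioo (0 : ℝ) t)).prod volume)) ≤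
          ENNReal.ofReal C * ⨆ τ ∈ Set.Ioo (0 : ℝ) t, herzNorm n μ p r (f τ) := by
  have hn' : (3 : ℝ) ≤ n := by exact_mod_cast hn
  have hn0 : (0 : ℝ) < n := by linarith
  have hh : ν + n * (q⁻¹).toReal = μ + n * (p⁻¹).toReal - 2 := by
    field_simp at heq
    linarith
  obtain ⟨N1, hN1⟩ : ∃ N1 : ℝ, N1 = n * (1 - (p⁻¹).toReal) - μ := ⟨_, rfl⟩
  obtain ⟨N2, hN2⟩ : ∃ N2 : ℝ, N2 = ν + n * (q⁻¹).toReal := ⟨_, rfl⟩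
  have hN1' : N1 = n * (1 - (μ / (n : ℝ) + (p⁻¹).toReal)) := by
    rw [hN1]; field_simp; ring
  have hN10 : 0 ≤ N1 := by
    rw [hN1']
    exact mul_nonneg hn0.le (by linarith)
  have hN20 : 0 < N2 := by
    have : N2 = n * (ν / (n : ℝ) + (q⁻¹).toReal) := by rw [hN2]; field_simp
    rw [this]
    exact mul_pos hn0 h0
  have hN12 : N1 + N2 = n - 2 := by rw [hN1, hN2, hh]; ring
  have hcase' : 0 < N1 ∨ r ≤ 1 := by
    rcases hcase with h | h
    · left
      rw [hN1']
      exact mul_pos hn0 (by linarith [h.2.2])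
    · exact Or.inr h
  obtain ⟨cL, hcL, hL⟩ := low_sum n hn μ p r hp hr N1 hN1 hN10 hcase'
  obtain ⟨cB, hcB, hB⟩ := pointwise_bound n hn μ p hp N1 N2 hN1 hN12 hN20 cL hcL
  obtain ⟨cN, hcN, hN⟩ := near_lemma n hn μ ν p q hp hμν hh
  obtain ⟨cE, hcE, hE⟩ := annulus_emb n q ⊤ le_top
  have hcfin : cE * cB + cN ≠ ⊤ := ENNReal.add_ne_top.2 ⟨ENNReal.mul_ne_top hcE hcB, hcN⟩
  refine ⟨(cE * cB + cN).toReal + 1, by positivity, ?_⟩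
  intro T _ t _ f hf _
  set M := ⨆ τ ∈ Set.Ioo (0 : ℝ) t, herzNorm n μ p r (f τ) with hMdef
  have hMτ : ∀ τ ∈ Ioo 0 t, herzNorm n μ p r (f τ) ≤ M := fun τ hτ =>
    le_iSup₂ (f := fun τ (_ : τ ∈ Set.Ioo (0 : ℝ) t) => herzNorm n μ p r (f τ)) τ hτ
  have hFm : Measurable (Function.uncurry (fun τ y => ‖f τ y‖ₑ)) := hf.enorm
  have hfτ : ∀ τ, Measurable (f τ) := fun τ => hf.comp measurable_prodMk_left
  have hC : cE * cB + cN ≤ ENNReal.ofReal ((cE * cB + cN).toReal + 1) := by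
    calc _ = ENNReal.ofReal (cE * cB + cN).toReal := (ENNReal.ofReal_toReal hcfin).symm
      _ ≤ _ := ENNReal.ofReal_le_ofReal (by linarith)
  refine le_trans ?_ (mul_le_mul' hC le_rfl)
  rw [herzNorm, if_pos rfl]
  refine iSup_le fun k => ?_
  rw [ofReal_two_rpow]
  have hterm : ∀ τ ∈ Ioo 0 t, ∀ j : ℤ, pw ((j : ℝ) * μ) *
      eLpNorm ((annulus n j).indicator (fun y => ‖f τ y‖ₑ)) p volume ≤ M := fun τ hτ j =>
    (herz_term_le n μ p r hr (f τ) j).trans (hMτ τ hτ)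
  have hlow : ∀ τ ∈ Ioo 0 t, ∫⁻ y in Metric.ball (0 : Euc n) ((2 : ℝ) ^ (k - 2)), ‖f τ y‖ₑ ≤
      cL * pw (k * N1) * M := fun τ hτ =>
    (hL k (f τ) (hfτ τ)).trans (by gcongr; exact hMτ τ hτ)
  have hpt := hB k t (fun τ y => ‖f τ y‖ₑ) M hFm hterm hlow
  have hnear := hN k t (fun τ y => ‖f τ y‖ₑ) M hFm hterm
  set K0 : ℝ≥0∞ := cB * pw (-(k * N2)) * M with hK0
  set NN : Euc n → ℝ≥0∞ := fun x => ∫⁻ τ in Ioo 0 t, ∫⁻ y in nearSet n k,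
        ENNReal.ofReal (heatKernel n (t - τ) x y) * ‖f τ y‖ₑ with hNN
  have hNNm : Measurable NN := measurable_duhamel n t (nearSet n k) _ hFm
  have hA := measurableSet_annulus n k
  calc _ ≤ pw (k * ν) * eLpNorm ((annulus n k).indicator (fun _ => K0) +
        (annulus n k).indicator NN) q volume := by
        gcongr
        refine eLpNorm_mono_enorm fun x => ?_
        by_cases hx : x ∈ annulus n k
        · simp only [Pi.add_apply, indicator_of_mem hx]
          rw [enorm_eq_self]
          exact (enorm_duhamel_le n t f hf x).trans (hpt x hx)
        · simp [indicator_of_notMem hx]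
    _ ≤ pw (k * ν) * (eLpNorm ((annulus n k).indicator (fun _ => K0)) q volume +
        eLpNorm ((annulus n k).indicator NN) q volume) := by
        gcongr
        exact eLpNorm_add_le (measurable_const.indicator hA).aestronglyMeasurable
          (hNNm.indicator hA).aestronglyMeasurable hq
    _ ≤ pw (k * ν) * (cE * pw (k * (n * (q⁻¹).toReal)) * K0) +
        pw (k * ν) * eLpNorm ((annulus n k).indicator NN) q volume := by
        rw [mul_add]
        gcongr
        refine (hE k (fun _ => K0) measurable_const).trans ?_
        have e1 : eLpNorm ((annulus n k).indicator (fun _ => K0)) ⊤ volume ≤ K0 := by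
          rw [eLpNorm_exponent_top]
          refine eLpNormEssSup_le_of_ae_enorm_bound (ae_of_all _ fun x => ?_)
          rw [enorm_eq_self]
          exact indicator_le_self _ _ x
        have e2 : (k : ℝ) * (n * ((q⁻¹).toReal - ((⊤ : ℝ≥0∞)⁻¹).toReal)) =
            k * (n * (q⁻¹).toReal) := by simp
        rw [e2]
        gcongr
    _ ≤ cE * cB * M + cN * M := by
        refine add_le_add (le_of_eq ?_) hnear
        calc _ = cE * cB * M * (pw (k * ν) * pw (k * (n * (q⁻¹).toReal)) * pw (-(k * N2))) := by
              rw [hK0]; ring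
          _ = cE * cB * M * pw 0 := by
              rw [← pw_add, ← pw_add]
              congr 2
              rw [hN2]; ring
          _ = _ := by rw [pw_zero, mul_one]
    _ = _ := by rw [add_mul]
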